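/- ∫_{−1}^{1} ∫_{−1}^{1} (1 + (|t| + |x| − |t − x|)/2) · (1/(π√(1−t²))) · (1/(π√(1−x²))) dt dx = 1 + 2/π − 4/π². -/

import Mathlib

open Real

open MeasureTheory Polynomial.Chebyshev Set

/-!
Under the substitution `x = cos θ` the arcsine distribution becomes the uniform distribution of
`θ` on `[0, π]`. For independent `X`, `X'` with a common law, the mean of the kernel is
`1 + 𝔼|X| - 𝔼|X - X'| / 2`. Since `cos` decreases on `[0, π]`, the function `|cos θ - cos α|` is
`cos θ - cos α` before `α` and `cos α - cos θ` after it; integrating in `θ` gives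
`2 sin α + (π - 2α) cos α`, hence `𝔼|X| = 2 / π` at `α = π / 2` and, integrating once more in `α`,
`𝔼|X - X'| = 8 / π ^ 2`.
-/

lemma integral_integral_one_add_abs_add_abs_sub_abs_sub (μ : Measure ℝ) [IsProbabilityMeasure μ]
    (hμ : Integrable (fun x => x) μ) :
    ∫ x, ∫ t, (1 + (|t| + |x| - |t - x|) / 2) ∂μ ∂μ
      = 1 + (∫ x, |x| ∂μ) - (∫ x, ∫ t, |t - x| ∂μ ∂μ) / 2 := by
  have habs : Integrable (fun x => |x|) μ := hμ.abs
  have hdiff : Integrable (fun p : ℝ × ℝ => |p.2 - p.1|) (μ.prod μ) :=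
    ((hμ.comp_snd μ).sub (hμ.comp_fst μ)).abs
  have hinner (x : ℝ) : ∫ t, (1 + (|t| + |x| - |t - x|) / 2) ∂μ
      = 1 + ((∫ t, |t| ∂μ) + |x| - ∫ t, |t - x| ∂μ) / 2 := by
    have hx : Integrable (fun t => |t - x|) μ := (hμ.sub (integrable_const x)).abs
    rw [integral_add (by fun_prop) (by fun_prop), integral_div, integral_sub (by fun_prop) hx,
      integral_add habs (by fun_prop)]
    simp
  have hmean : Integrable (fun x => ∫ t, |t - x| ∂μ) μ := hdiff.integral_prod_left
  simp only [hinner]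
  rw [integral_add (by fun_prop) (by fun_prop), integral_div, integral_sub (by fun_prop) hmean,
    integral_add (by fun_prop) habs]
  simp only [integral_const, probReal_univ, smul_eq_mul, mul_one, one_mul]
  ring

lemma integral_abs_sub_of_antitoneOn {f : ℝ → ℝ} {a b c : ℝ} (hf : AntitoneOn f (Icc a b))
    (hc : c ∈ Icc a b) :
    ∫ x in a..b, |f x - f c| = (∫ x in a..c, (f x - f c)) + ∫ x in c..b, (f c - f x) := by
  have hab : a ≤ b := hc.1.trans hc.2
  have hint : IntervalIntegrable (fun x => |f x - f c|) volume a b :=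
    ((uIcc_of_le hab ▸ hf).intervalIntegrable.sub intervalIntegrable_const).abs
  have hc' : c ∈ uIcc a b := uIcc_of_le hab ▸ hc
  rw [← intervalIntegral.integral_add_adjacent_intervals
    (hint.mono_set (uIcc_subset_uIcc_left hc')) (hint.mono_set (uIcc_subset_uIcc_right hc'))]
  congr 1 <;> refine intervalIntegral.integral_congr fun x hx => ?_
  · rw [uIcc_of_le hc.1] at hx
    exact abs_of_nonneg (sub_nonneg.2 (hf ⟨hx.1, hx.2.trans hc.2⟩ hc hx.2))
  · rw [uIcc_of_le hc.2] at hx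
    rw [abs_sub_comm]
    exact abs_of_nonneg (sub_nonneg.2 (hf hc ⟨hc.1.trans hx.1, hx.2⟩ hx.1))

lemma integral_abs_cos_sub_cos {α : ℝ} (hα : α ∈ Icc 0 π) :
    ∫ θ in 0..π, |cos θ - cos α| = 2 * sin α + (π - 2 * α) * cos α := by
  rw [integral_abs_sub_of_antitoneOn antitoneOn_cos hα,
    intervalIntegral.integral_sub (by simp) (by simp),
    intervalIntegral.integral_sub (by simp) (by simp)]
  simp only [integral_cos, intervalIntegral.integral_const, sin_zero, sin_pi, smul_eq_mul]
  ring

lemma integral_two_mul_sin_add_pi_sub_mul_cos :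
    ∫ α in 0..π, (2 * sin α + (π - 2 * α) * cos α) = 8 := by
  have hderiv (α : ℝ) : HasDerivAt (fun α => (π - 2 * α) * sin α - 4 * cos α)
      (2 * sin α + (π - 2 * α) * cos α) α := by
    refine (((((hasDerivAt_id α).const_mul 2).const_sub π).mul (hasDerivAt_sin α)).sub
      ((hasDerivAt_cos α).const_mul 4)).congr_deriv ?_
    simp only [id]
    ring
  rw [intervalIntegral.integral_eq_sub_of_hasDerivAt (fun α _ => hderiv α)
    (Continuous.intervalIntegrable (by fun_prop) _ _)]
  norm_num

/-- The arcsine distribution on `[-1, 1]`, as the normalization of the weight `√(1 - x ^ 2)⁻¹`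
for which the Chebyshev polynomials of the first kind are orthogonal. -/
noncomputable def arcsineMeasure : Measure ℝ :=
  ENNReal.ofReal π⁻¹ • measureT

namespace arcsineMeasure

lemma integral_eq_intervalIntegral (f : ℝ → ℝ) :
    ∫ x, f x ∂arcsineMeasure = ∫ x in (-1 : ℝ)..1, f x * (1 / (π * √(1 - x ^ 2))) := by
  rw [arcsineMeasure, integral_smul_measure, integral_measureT, smul_eq_mul,
    ENNReal.toReal_ofReal (by positivity), ← intervalIntegral.integral_const_mul]
  congr! 2
  rw [one_div, mul_inv, sqrt_inv, mul_left_comm]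

lemma integral_eq_integral_cos (f : ℝ → ℝ) :
    ∫ x, f x ∂arcsineMeasure = π⁻¹ * ∫ θ in 0..π, f (cos θ) := by
  rw [arcsineMeasure, integral_smul_measure, integral_measureT_eq_integral_cos, smul_eq_mul,
    ENNReal.toReal_ofReal (by positivity)]

lemma integrable_of_continuousOn {f : ℝ → ℝ} (hf : ContinuousOn f (Icc (-1) 1)) :
    Integrable f arcsineMeasure :=
  (integrable_measureT hf).smul_measure ENNReal.ofReal_ne_top

instance : IsProbabilityMeasure arcsineMeasure :=
  isProbabilityMeasure_iff_real.2 <| by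
    simpa [pi_ne_zero] using integral_eq_integral_cos fun _ => 1

lemma integral_abs_sub_cos {α : ℝ} (hα : α ∈ Icc 0 π) :
    ∫ t, |t - cos α| ∂arcsineMeasure = π⁻¹ * (2 * sin α + (π - 2 * α) * cos α) := by
  rw [integral_eq_integral_cos, integral_abs_cos_sub_cos hα]

lemma integral_abs : ∫ t, |t| ∂arcsineMeasure = 2 / π := by
  have h := integral_abs_sub_cos (α := π / 2) ⟨by positivity, by linarith [pi_pos]⟩
  simp only [cos_pi_div_two, sin_pi_div_two, sub_zero, mul_zero, add_zero] at h
  rw [h]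
  ring

lemma integral_integral_abs_sub :
    ∫ x, ∫ t, |t - x| ∂arcsineMeasure ∂arcsineMeasure = 8 / π ^ 2 := by
  rw [integral_eq_integral_cos]
  calc π⁻¹ * ∫ α in 0..π, ∫ t, |t - cos α| ∂arcsineMeasure
      = π⁻¹ * ∫ α in 0..π, π⁻¹ * (2 * sin α + (π - 2 * α) * cos α) := by
        congr 1
        refine intervalIntegral.integral_congr fun α hα => ?_
        exact integral_abs_sub_cos (uIcc_of_le pi_pos.le ▸ hα)
    _ = 8 / π ^ 2 := by
        rw [intervalIntegral.integral_const_mul, integral_two_mul_sin_add_pi_sub_mul_cos]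
        ring

end arcsineMeasure

/-- double integral of the kernel `K₁(x,t) = 1 + (|t|+|x|-|t-x|)/2`
against the arcsine distribution on `[-1,1]` in both variables. -/
theorem kernel_double_integral_arcsine_one_dim :
    (∫ x in (-1 : ℝ)..1, ∫ t in (-1 : ℝ)..1,
        (1 + (|t| + |x| - |t - x|) / 2) * (1 / (π * Real.sqrt (1 - t ^ 2)))
          * (1 / (π * Real.sqrt (1 - x ^ 2))))
      = 1 + 2 / π - 4 / π ^ 2 := by
  simp only [intervalIntegral.integral_mul_const, ← arcsineMeasure.integral_eq_intervalIntegral]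
  rw [integral_integral_one_add_abs_add_abs_sub_abs_sub arcsineMeasure
      (arcsineMeasure.integrable_of_continuousOn continuousOn_id),
    arcsineMeasure.integral_abs, arcsineMeasure.integral_integral_abs_sub]
  ring
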